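/- arXiv:1409.8488 — 6 statements merged into one kernel-verified Lean document; each statement's English description precedes it below -/
import Mathlib

section
/- Let n be a positive integer and let x, y : Fin n → ZMod 2. Work in the Hilbert space H = EuclideanSpace ℂ ((Fin n → ZMod 2) × ZMod 2) with orthonormal basis vectors e_(r,b) indexed by pairs (r,b). Define φ = 2^(−n/2) · Σ_{r : Fin n → ZMod 2} e_(r, r·x), and let V_y and U_x be the linear maps determined on basis vectors by V_y(e_(r,b)) = e_(r+y, b) and U_x(e_(r,b)) = e_(r, b + r·x). Then U_x(V_y(φ)) = 2^(−n/2) · Σ_{r : Fin n → ZMod 2} e_(r, x·y). In other words, at the end of the quantum Inner Product protocol Π_IP, after Alice applies U_x, the second register is in the basis state |x·y⟩ unentangled from the first register. -/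
open scoped BigOperators

/-- Inner product of two bit strings, in `ZMod 2`. -/
def ip {m : ℕ} (u v : Fin m → ZMod 2) : ZMod 2 := ∑ t, u t * v t

/-- Standard basis vector of `EuclideanSpace ℂ ι` supported at `p`. -/
noncomputable def e {ι : Type*} [DecidableEq ι] [Fintype ι] (p : ι) : EuclideanSpace ℂ ι :=
  EuclideanSpace.single p 1

theorem stmt0 (n : ℕ) (hn : 0 < n) (x y : Fin n → ZMod 2)
    (V U : EuclideanSpace ℂ ((Fin n → ZMod 2) × ZMod 2) →ₗ[ℂ]
      EuclideanSpace ℂ ((Fin n → ZMod 2) × ZMod 2))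
    (hV : ∀ (r : Fin n → ZMod 2) (b : ZMod 2), V (e (r, b)) = e (r + y, b))
    (hU : ∀ (r : Fin n → ZMod 2) (b : ZMod 2), U (e (r, b)) = e (r, b + ip r x)) :
    U (V (((Real.sqrt (2 ^ n) : ℂ))⁻¹ • ∑ r : Fin n → ZMod 2, e (r, ip r x))) =
      ((Real.sqrt (2 ^ n) : ℂ))⁻¹ • ∑ r : Fin n → ZMod 2, e (r, ip x y) := by
  have ip_add : ∀ r, ip r x + ip (r + y) x = ip x y := by
    intro r
    simp only [ip, ← Finset.sum_add_distrib, Pi.add_apply]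
    refine Finset.sum_congr rfl fun t _ => ?_
    -- The two copies of `r t * x t` cancel in characteristic two.
    rw [add_mul, ← add_assoc, CharTwo.add_self_eq_zero, zero_add, mul_comm]
  simp only [map_smul, map_sum, hV, hU, ip_add]
  -- The remaining sums differ by the translation `r ↦ r + y` of the index.
  congr 1
  exact Equiv.sum_comp (Equiv.addRight y) fun r => e (r, ip x y)
end

section
/- Let ℓ be a positive integer, let x : Fin (2^ℓ) → ZMod 2, let i_1,…,i_ℓ ∈ ZMod 2, and for each k ∈ {1,…,ℓ} let y^k : Fin (2^(ℓ−k)) → ZMod 2 be an arbitrary string. Define b^1 = x[i_1] + y^1 and, for k ∈ {2,…,ℓ}, b^k = y^(k−1)[i_k] + y^k (so b^k has length 2^(ℓ−k); + is pointwise addition in ZMod 2). Then, as elements of ZMod 2: x[i_1,…,i_ℓ](0) = b^1[i_2,…,i_ℓ](0) + b^2[i_3,…,i_ℓ](0) + … + b^(ℓ−1)[i_ℓ](0) + b^ℓ(0) + y^ℓ(0). In other words, in the entanglement-assisted quantum PIR protocol, the user can recover the database bit x_i as the XOR of the final register bit y^ℓ with the appropriate bits of his own registers b^1,…,b^ℓ.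 -/
/-!
Halving commutes with pointwise addition, and removing the first index of an iterated halving
replaces the string by its half (`halfIter_succ_left`). In characteristic two the definition of the
registers reads `x[i_1] = b^1 + y^1` and `y^(k-1)[i_k] = b^k + y^k`. Applying the remaining halvings
to these identities gives `x[i_1,…,i_ℓ] = b^1[i_2,…,i_ℓ] + y^1[i_2,…,i_ℓ]` and
`y^(k-1)[i_k,…,i_ℓ] = b^k[i_(k+1),…,i_ℓ] + y^k[i_(k+1),…,i_ℓ]`, so the sum telescopes.
-/

open scoped BigOperators

/-- The half `z[j]` of a bit string `z` of length `2^s`: the first half if `j = 0`,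
the second half if `j = 1` (i.e. `z[j](t) = z(j·2^(s-1) + t)` for `s ≥ 1`). -/
def half {s : ℕ} (z : Fin (2 ^ s) → ZMod 2) (j : ZMod 2) : Fin (2 ^ (s - 1)) → ZMod 2 :=
  fun t => z ⟨(j.val * 2 ^ (s - 1) + t.val) % 2 ^ s, Nat.mod_lt _ (by positivity)⟩

/-- Iterated halving `z[j_1,…,j_k]`, defined by `z[] = z` and
`z[j_1,…,j_k] = (z[j_1,…,j_{k-1}])[j_k]`. -/
def halfIter {s : ℕ} (z : Fin (2 ^ s) → ZMod 2) :
    (k : ℕ) → (Fin k → ZMod 2) → Fin (2 ^ (s - k)) → ZMod 2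
  | 0, _ => z
  | k + 1, js => half (halfIter z k (fun t => js t.castSucc)) (js (Fin.last k))

theorem halfIter_add {s : ℕ} (z w : Fin (2 ^ s) → ZMod 2) (k : ℕ) (js : Fin k → ZMod 2) :
    halfIter (z + w) k js = halfIter z k js + halfIter w k js := by
  induction k with
  | zero => rfl
  | succ k ih =>
    funext t
    simp only [halfIter, ih]
    rfl

/-- `z[j_1,…,j_(k+1)] = (z[j_1])[j_2,…,j_(k+1)]`. The two strings have lengths `2 ^ (s - (k + 1))`
and `2 ^ (s - 1 - k)`, which are not definitionally equal, so they are compared at positions with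
equal values. -/
theorem halfIter_succ_left {s : ℕ} (z : Fin (2 ^ s) → ZMod 2) (k : ℕ)
    (js : Fin (k + 1) → ZMod 2) (t : Fin (2 ^ (s - (k + 1)))) (t' : Fin (2 ^ (s - 1 - k)))
    (h : t.val = t'.val) :
    halfIter z (k + 1) js t = halfIter (half z (js 0)) k (fun a => js a.succ) t' := by
  induction k with
  | zero =>
    obtain rfl : t = t' := Fin.ext h
    rfl
  | succ k ih =>
    have e : s - (k + 1) = s - 1 - k := by omega
    exact ih (fun a => js a.castSucc) _ _ <| by
      change (_ * 2 ^ (s - (k + 1) - 1) + t.val) % 2 ^ (s - (k + 1)) =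
        (_ * 2 ^ (s - 1 - k - 1) + t'.val) % 2 ^ (s - 1 - k)
      rw [e, h]
      rfl

/-- The bit at index `0` of `z[f m, f (m+1), …, f (m+k-1)]`. Indexing the bits by all of `ℕ` keeps
proofs of bounds out of the terms. -/
def headBit {s : ℕ} (f : ℕ → ZMod 2) (z : Fin (2 ^ s) → ZMod 2) (m k : ℕ) : ZMod 2 :=
  halfIter z k (fun t => f (m + t.val)) ⟨0, by positivity⟩

theorem headBit_succ {s : ℕ} (f : ℕ → ZMod 2) (z : Fin (2 ^ s) → ZMod 2) (m k : ℕ) :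
    headBit f z m (k + 1) = headBit f (half z (f m)) (m + 1) k := by
  unfold headBit
  rw [halfIter_succ_left z k _ _ ⟨0, by positivity⟩ rfl]
  congr 1
  funext a
  simp only [Fin.val_succ]
  congr 1
  omega

theorem headBit_add {s : ℕ} (f : ℕ → ZMod 2) (z w : Fin (2 ^ s) → ZMod 2) (m k : ℕ) :
    headBit f (z + w) m k = headBit f z m k + headBit f w m k := by
  simp [headBit, halfIter_add]

theorem eq_add_of_eq_add_zmod_two {α : Type*} {b h y : α → ZMod 2} (e : b = h + y) :
    h = b + y := by
  funext t
  rw [e, Pi.add_apply, Pi.add_apply, add_assoc, CharTwo.add_self_eq_zero, add_zero]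

/-- Telescoping recovery of the database bit in the entanglement-assisted quantum PIR
protocol: here `y k` (0-indexed) is the paper's `y^{k+1}` and `b k` is the paper's
`b^{k+1}`, with `b^1 = x[i_1] ⊕ y^1` and `b^k = y^{k-1}[i_k] ⊕ y^k`. -/
theorem stmt5 (ℓ : ℕ) (hℓ : 0 < ℓ) (x : Fin (2 ^ ℓ) → ZMod 2) (i : Fin ℓ → ZMod 2)
    (y b : (k : ℕ) → Fin (2 ^ (ℓ - (k + 1))) → ZMod 2)
    (hb0 : b 0 = half x (i ⟨0, hℓ⟩) + y 0)
    (hb : ∀ (k : ℕ) (hk : k + 1 < ℓ),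
      b (k + 1) = fun t => half (y k) (i ⟨k + 1, hk⟩) t + y (k + 1) t) :
    halfIter x ℓ i ⟨0, by positivity⟩ =
      (∑ k : Fin ℓ, halfIter (b k.val) (ℓ - 1 - k.val)
          (fun t => i ⟨k.val + 1 + t.val, by have h1 := t.isLt; have h2 := k.isLt; omega⟩)
          ⟨0, by positivity⟩) +
        y (ℓ - 1) ⟨0, by positivity⟩ := by
  obtain ⟨n, rfl⟩ : ∃ n, ℓ = n + 1 := ⟨ℓ - 1, by omega⟩
  -- The index bits, extended by `0` to all of `ℕ`.
  let f : ℕ → ZMod 2 := fun m => if h : m < n + 1 then i ⟨m, h⟩ else 0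
  have hf : ∀ (m : ℕ) (h : m < n + 1), f m = i ⟨m, h⟩ := fun m h => dif_pos h
  -- The telescoping identity, stopped after the register `b m`.
  have key : ∀ m, m ≤ n → headBit f x 0 (n + 1) =
      ∑ k ∈ Finset.range (m + 1), headBit f (b k) (k + 1) (n - k) +
        headBit f (y m) (m + 1) (n - m) := by
    intro m
    induction m with
    | zero =>
      intro _
      rw [headBit_succ, hf 0 hℓ, eq_add_of_eq_add_zmod_two hb0]
      simpa using headBit_add f (b 0) (y 0) 1 n
    | succ m ih =>
      intro hm
      have e : n - m = (n - (m + 1)) + 1 := by omega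
      have step : headBit f (y m) (m + 1) (n - m) =
          headBit f (b (m + 1)) (m + 1 + 1) (n - (m + 1)) +
            headBit f (y (m + 1)) (m + 1 + 1) (n - (m + 1)) := by
        rw [e, headBit_succ, hf (m + 1) (by omega)]
        have h2 : half (y m) (i ⟨m + 1, by omega⟩) = b (m + 1) + y (m + 1) :=
          eq_add_of_eq_add_zmod_two (hb m (by omega))
        rw [h2]
        exact headBit_add f (b (m + 1)) (y (m + 1)) _ _
      rw [ih (by omega), Finset.sum_range_succ _ (m + 1), step]
      exact (add_assoc _ _ _).symm
  have hx : halfIter x (n + 1) i ⟨0, by positivity⟩ = headBit f x 0 (n + 1) := by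
    unfold headBit
    congr 1
    funext t
    simp [hf _ t.isLt]
  have hy : headBit f (y n) (n + 1) (n - n) = y n ⟨0, by positivity⟩ := by
    have : ∀ k, k = 0 → headBit f (y n) (n + 1) k = y n ⟨0, by positivity⟩ := by
      rintro _ rfl
      rfl
    exact this _ (Nat.sub_self n)
  rw [hx, key n le_rfl, hy, ← Fin.sum_univ_eq_sum_range]
  refine congrArg₂ (· + ·) (Finset.sum_congr rfl fun k _ => ?_) rfl
  change halfIter _ (n - k.val) _ _ = halfIter _ (n - k.val) _ _
  congr 1
  funext t
  exact hf _ _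
end

section
/- Let m be a positive integer, let w : Fin (2m) → ZMod 2 with halves w[0], w[1] : Fin m → ZMod 2, and let i ∈ ZMod 2. Work in the Hilbert space EuclideanSpace ℂ ((Fin m → ZMod 2) × (Fin m → ZMod 2) × ZMod 2 × ZMod 2) with basis vectors e_(z,z',a,b). Define linear maps on basis vectors: V_w(e_(z,z',a,b)) = e_(z, z', a + z·w[0], b + z·w[1]); Z_i(e_(z,z',a,b)) = (−1)^a · e_(z,z',a,b) if i = 0 and (−1)^b · e_(z,z',a,b) if i = 1 (where the exponent is the bit a or b interpreted as 0 or 1); and W(e_(z,z',a,b)) = 2^(−m) · Σ_{u,v : Fin m → ZMod 2} (−1)^(z·u + z'·v) · e_(u,v,a,b). Let ψ₀ = 2^(−m/2) · Σ_{z : Fin m → ZMod 2} e_(z,z,0,0). Then W(V_w(Z_i(V_w(ψ₀)))) = 2^(−m/2) · Σ_{u : Fin m → ZMod 2} e_(u, w[i]+u, 0, 0), where w[i] denotes w[0] if i = 0 and w[1] if i = 1. -/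
/-!
On a basis vector `e (z, z, 0, 0)`, the map `V` writes `z·w₀` and `z·w₁` into the two answer bits,
`Z` multiplies by the sign `(-1)^(z·x)`, where `x` is `w₀` or `w₁` according to `i`, and the second
`V` clears the answer bits because the characteristic is two. Applying `W` and collecting terms,
the coefficient of `e (u, v, 0, 0)` is proportional to `∑ z, (-1)^(z·(x + u + v))`. By orthogonality
of characters (`sum_sgn_ip`) this sum is `2 ^ m` if `v = x + u` and vanishes otherwise.
-/

open scoped BigOperators

/-- The nontrivial additive character `a ↦ (-1)^a` of `ZMod 2`. -/
noncomputable def sgn (a : ZMod 2) : ℂ := (-1 : ℂ) ^ a.val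

lemma sgn_zero : sgn 0 = 1 := by simp [sgn]

lemma sgn_one : sgn 1 = -1 := by simp [sgn, ZMod.val_one]

lemma sgn_add (a b : ZMod 2) : sgn (a + b) = sgn a * sgn b := by
  have h : ∀ c : ZMod 2, c = 0 ∨ c = 1 := by decide
  have h2 : (1 : ZMod 2) + 1 = 0 := by decide
  rcases h a with rfl | rfl <;> rcases h b with rfl | rfl <;> simp [sgn_zero, sgn_one, h2]

lemma ip_add_left {m : ℕ} (u u' v : Fin m → ZMod 2) : ip (u + u') v = ip u v + ip u' v := by
  simp [ip, add_mul, Finset.sum_add_distrib]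

lemma ip_add_right {m : ℕ} (u v v' : Fin m → ZMod 2) : ip u (v + v') = ip u v + ip u v' := by
  simp [ip, mul_add, Finset.sum_add_distrib]

/-- Orthogonality of characters on `(ZMod 2)^m`. If `y t ≠ 0`, translating the summation variable
by the `t`-th unit vector flips the sign of the sum. -/
lemma sum_sgn_ip {m : ℕ} (y : Fin m → ZMod 2) :
    ∑ z : Fin m → ZMod 2, sgn (ip z y) = if y = 0 then (2 : ℂ) ^ m else 0 := by
  split_ifs with hy
  · subst hy
    simp [ip, sgn_zero, ZMod.card]
  · obtain ⟨t, ht⟩ := Function.ne_iff.mp hy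
    have h01 : ∀ c : ZMod 2, c ≠ 0 → c = 1 := by decide
    have hip : ip (Pi.single t 1) y = 1 := by
      simpa [ip, Pi.single_apply] using h01 _ ht
    have h := Equiv.sum_comp (Equiv.addRight (Pi.single t (1 : ZMod 2)))
      (fun z : Fin m → ZMod 2 => sgn (ip z y))
    simp only [Equiv.coe_addRight, ip_add_left, sgn_add, hip, sgn_one, mul_neg, mul_one,
      Finset.sum_neg_distrib] at h
    exact self_eq_neg.mp h.symm

theorem stmt6 (m : ℕ) (hm : 0 < m) (w : Fin (2 * m) → ZMod 2) (i : ZMod 2)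
    (w0 w1 : Fin m → ZMod 2)
    (hw0 : ∀ t : Fin m, w0 t = w ⟨t.val, by have := t.isLt; omega⟩)
    (hw1 : ∀ t : Fin m, w1 t = w ⟨m + t.val, by have := t.isLt; omega⟩)
    (V Z W : EuclideanSpace ℂ ((Fin m → ZMod 2) × (Fin m → ZMod 2) × ZMod 2 × ZMod 2) →ₗ[ℂ]
      EuclideanSpace ℂ ((Fin m → ZMod 2) × (Fin m → ZMod 2) × ZMod 2 × ZMod 2))
    (hV : ∀ (z z' : Fin m → ZMod 2) (a b : ZMod 2),
      V (e (z, z', a, b)) = e (z, z', a + ip z w0, b + ip z w1))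
    (hZ : ∀ (z z' : Fin m → ZMod 2) (a b : ZMod 2),
      Z (e (z, z', a, b)) =
        (if i = 0 then (-1 : ℂ) ^ a.val else (-1 : ℂ) ^ b.val) • e (z, z', a, b))
    (hW : ∀ (z z' : Fin m → ZMod 2) (a b : ZMod 2),
      W (e (z, z', a, b)) = ((2 : ℂ) ^ m)⁻¹ •
        ∑ u : Fin m → ZMod 2, ∑ v : Fin m → ZMod 2,
          (-1 : ℂ) ^ ((ip z u + ip z' v).val) • e (u, v, a, b)) :
    W (V (Z (V (((Real.sqrt (2 ^ m) : ℂ))⁻¹ •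
        ∑ z : Fin m → ZMod 2, e (z, z, 0, 0))))) =
      ((Real.sqrt (2 ^ m) : ℂ))⁻¹ •
        ∑ u : Fin m → ZMod 2, e (u, (if i = 0 then w0 else w1) + u, 0, 0) := by
  set x := if i = 0 then w0 else w1 with hx
  have hVZV : ∀ z : Fin m → ZMod 2,
      V (Z (V (e (z, z, 0, 0)))) = sgn (ip z x) • e (z, z, 0, 0) := by
    intro z
    have hs : (if i = 0 then (-1 : ℂ) ^ (ip z w0).val else (-1 : ℂ) ^ (ip z w1).val)
        = sgn (ip z x) := by
      rw [hx]
      split_ifs <;> rfl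
    simp only [hV, hZ, map_smul, zero_add, CharTwo.add_self_eq_zero, hs]
  have hvanish : ∀ u v : Fin m → ZMod 2, x + u + v = 0 ↔ v = x + u := by
    intro u v
    simp only [funext_iff, Pi.add_apply, Pi.zero_apply, CharTwo.add_eq_zero]
    exact forall_congr' fun t => eq_comm
  -- Once summed over `z`, the signs form a character sum supported on `v = x + u`.
  have hcoef : ∀ u v : Fin m → ZMod 2,
      ∑ z : Fin m → ZMod 2, sgn (ip z x) * sgn (ip z u + ip z v)
        = if v = x + u then (2 : ℂ) ^ m else 0 := by
    intro u v
    simp only [← hvanish, ← sum_sgn_ip, ip_add_right, sgn_add, mul_assoc]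
  have hWz : ∀ z : Fin m → ZMod 2, W (sgn (ip z x) • e (z, z, 0, 0)) =
      ((2 : ℂ) ^ m)⁻¹ • ∑ u : Fin m → ZMod 2, ∑ v : Fin m → ZMod 2,
        (sgn (ip z x) * sgn (ip z u + ip z v)) • e (u, v, 0, 0) := by
    intro z
    rw [map_smul, hW, smul_comm]
    simp only [Finset.smul_sum, smul_smul, sgn]
  simp only [map_smul, map_sum, hVZV]
  congr 1
  simp only [← map_smul, hWz]
  rw [← Finset.smul_sum, Finset.sum_comm, Finset.smul_sum]
  refine Finset.sum_congr rfl fun u _ => ?_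
  rw [Finset.sum_comm]
  simp only [← Finset.sum_smul, hcoef, ite_smul, zero_smul, Finset.sum_ite_eq', Finset.mem_univ,
    if_true]
  rw [smul_smul, inv_mul_cancel₀ (pow_ne_zero m two_ne_zero), one_smul]
end

section
/- Let m be a positive integer, let w : Fin (2m) → ZMod 2 with halves w[0], w[1] : Fin m → ZMod 2, and let i ∈ ZMod 2. Work in the Hilbert space EuclideanSpace ℂ ((Fin m → ZMod 2) × (Fin m → ZMod 2) × ZMod 2 × ZMod 2) with basis vectors e_(z,z',a,b). Define V_w(e_(z,z',a,b)) = e_(z, z', a + z·w[0], b + z·w[1]) and Z_i(e_(z,z',a,b)) = (−1)^a · e_(z,z',a,b) if i = 0 and (−1)^b · e_(z,z',a,b) if i = 1. Let ψ₀ = 2^(−m/2) · Σ_{z : Fin m → ZMod 2} e_(z,z,0,0). Then V_w(Z_i(V_w(ψ₀))) = 2^(−m/2) · Σ_{z : Fin m → ZMod 2} (−1)^(z·w[i]) · e_(z,z,0,0), where w[i] denotes w[0] if i = 0 and w[1] if i = 1. In particular, the answer qubits return to the state |0⟩|0⟩ and the user's choice of i is recorded only in the phases. -/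
open scoped BigOperators

theorem stmt8 (m : ℕ) (hm : 0 < m) (w : Fin (2 * m) → ZMod 2) (i : ZMod 2)
    (w0 w1 : Fin m → ZMod 2)
    (hw0 : ∀ t : Fin m, w0 t = w ⟨t.val, by have := t.isLt; omega⟩)
    (hw1 : ∀ t : Fin m, w1 t = w ⟨m + t.val, by have := t.isLt; omega⟩)
    (V Z : EuclideanSpace ℂ ((Fin m → ZMod 2) × (Fin m → ZMod 2) × ZMod 2 × ZMod 2) →ₗ[ℂ]
      EuclideanSpace ℂ ((Fin m → ZMod 2) × (Fin m → ZMod 2) × ZMod 2 × ZMod 2))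
    (hV : ∀ (z z' : Fin m → ZMod 2) (a b : ZMod 2),
      V (e (z, z', a, b)) = e (z, z', a + ip z w0, b + ip z w1))
    (hZ : ∀ (z z' : Fin m → ZMod 2) (a b : ZMod 2),
      Z (e (z, z', a, b)) =
        (if i = 0 then (-1 : ℂ) ^ a.val else (-1 : ℂ) ^ b.val) • e (z, z', a, b)) :
    V (Z (V (((Real.sqrt (2 ^ m) : ℂ))⁻¹ • ∑ z : Fin m → ZMod 2, e (z, z, 0, 0)))) =
      ((Real.sqrt (2 ^ m) : ℂ))⁻¹ •
        ∑ z : Fin m → ZMod 2,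
          (-1 : ℂ) ^ ((ip z (if i = 0 then w0 else w1)).val) • e (z, z, 0, 0) := by
  simp only [map_smul, map_sum, hV, hZ, zero_add]
  congr 1
  refine Finset.sum_congr rfl fun z _ => ?_
  -- The second application of `V` doubles each answer bit, and doubling is zero in `ZMod 2`.
  rw [CharTwo.add_self_eq_zero, CharTwo.add_self_eq_zero]
  split_ifs <;> rfl
end

section
/- Let ℓ, R, m_a be positive integers, let Q be a finite type (the type of queries), and let A = Fin m_a → ZMod 2 (the type of answers, with zero element 0). Let q : Fin R → Fin ℓ → Q assign to each r the ℓ-tuple of queries (q r 1, …, q r ℓ), and let ans : Fin ℓ → Q → A be the servers' answer functions. Work in the Hilbert space EuclideanSpace ℂ ((Fin ℓ → Q) × (Fin ℓ → Q) × (Fin ℓ → A)) with basis vectors e_(c, qs, as). For each i ∈ Fin ℓ define the linear map S_i on basis vectors by S_i(e_(c, qs, as)) = e_(c, qs, Function.update as i (as i + ans i (qs i))). Let φ = R^(−1/2) · Σ_{r : Fin R} e_(q r, q r, fun i ↦ 0). Then (S_ℓ ∘ ⋯ ∘ S_2 ∘ S_1)(φ) = R^(−1/2) · Σ_{r : Fin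 R} e_(q r, q r, fun i ↦ ans i (q r i)). In other words, after all ℓ rounds of the one-server quantum protocol Q_PIR simulating an ℓ-server classical PIR scheme, the user holds a uniform superposition over the R query tuples together with all their answers. -/
/-!
Each round acts on basis vectors, so by linearity it suffices to follow a single branch
`e (c, qs, 0)` of the superposition. The queries never change, and round `i` rewrites only
answer register `i`, from `0` to `ans i (qs i)`. By induction, after `k` rounds the registers
below `k` hold their answers and the others are still `0` (`iterComp_apply_branch`); at `k = ℓ`
all of them are filled.
-/

open scoped BigOperators

/-- `iterComp G k = G (k-1) ∘ ⋯ ∘ G 1 ∘ G 0`. -/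
noncomputable def iterComp {E : Type*} [AddCommMonoid E] [Module ℂ E]
    (G : ℕ → (E →ₗ[ℂ] E)) : ℕ → (E →ₗ[ℂ] E)
  | 0 => LinearMap.id
  | k + 1 => (G k).comp (iterComp G k)

/-- The state of one branch after the first `k` rounds: exactly the answer registers with
index below `k` have been filled. -/
theorem iterComp_apply_branch {ℓ ma : ℕ} {Q : Type} [Fintype Q] [DecidableEq Q]
    (ans : Fin ℓ → Q → (Fin ma → ZMod 2))
    (S : ℕ → (EuclideanSpace ℂ ((Fin ℓ → Q) × (Fin ℓ → Q) × (Fin ℓ → Fin ma → ZMod 2)) →ₗ[ℂ]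
      EuclideanSpace ℂ ((Fin ℓ → Q) × (Fin ℓ → Q) × (Fin ℓ → Fin ma → ZMod 2))))
    (hS : ∀ (i : Fin ℓ) (c qs : Fin ℓ → Q) (as : Fin ℓ → Fin ma → ZMod 2),
      S i.val (e (c, qs, as)) = e (c, qs, Function.update as i (as i + ans i (qs i))))
    (c qs : Fin ℓ → Q) (k : ℕ) (hk : k ≤ ℓ) :
    iterComp S k (e (c, qs, fun _ => (0 : Fin ma → ZMod 2))) =
      e (c, qs, fun i => if i.val < k then ans i (qs i) else 0) := by
  induction k with
  | zero => simp [iterComp]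
  | succ k ih =>
    rw [iterComp, LinearMap.comp_apply, ih (by omega)]
    refine (hS ⟨k, hk⟩ c qs _).trans ?_
    congr 3
    funext i
    by_cases h : i = ⟨k, hk⟩
    · subst h
      simp
    · have hne : i.val ≠ k := fun h' => h (Fin.ext h')
      have hiff : i.val < k + 1 ↔ i.val < k := by omega
      simp [Function.update_of_ne h, hiff]

/-- After all `ℓ` rounds of the one-server quantum protocol `Q_PIR` simulating an
`ℓ`-server classical PIR scheme (round `i` being the server operation `S i`), the user
holds a uniform superposition over the `R` query tuples together with all their answers.
Here `S k` for `k = 0, …, ℓ-1` is the paper's `S_{k+1}`. -/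
theorem stmt10 (ℓ R ma : ℕ) (hℓ : 0 < ℓ) (hR : 0 < R) (hma : 0 < ma)
    (Q : Type) [Fintype Q] [DecidableEq Q]
    (q : Fin R → Fin ℓ → Q) (ans : Fin ℓ → Q → (Fin ma → ZMod 2))
    (S : ℕ → (EuclideanSpace ℂ ((Fin ℓ → Q) × (Fin ℓ → Q) × (Fin ℓ → Fin ma → ZMod 2)) →ₗ[ℂ]
      EuclideanSpace ℂ ((Fin ℓ → Q) × (Fin ℓ → Q) × (Fin ℓ → Fin ma → ZMod 2))))
    (hS : ∀ (i : Fin ℓ) (c qs : Fin ℓ → Q) (as : Fin ℓ → Fin ma → ZMod 2),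
      S i.val (e (c, qs, as)) = e (c, qs, Function.update as i (as i + ans i (qs i)))) :
    iterComp S ℓ (((Real.sqrt R : ℂ))⁻¹ •
        ∑ r : Fin R, e (q r, q r, fun _ => (0 : Fin ma → ZMod 2))) =
      ((Real.sqrt R : ℂ))⁻¹ •
        ∑ r : Fin R, e (q r, q r, fun i => ans i (q r i)) := by
  rw [map_smul, map_sum]
  congr 1
  refine Finset.sum_congr rfl fun r _ => ?_
  rw [iterComp_apply_branch ans S hS _ _ ℓ le_rfl]
  simp
end

section
/- Let m be a positive integer and let w : Fin (2m) → ZMod 2 with halves w[0], w[1] : Fin m → ZMod 2. For i ∈ ZMod 2 and z : Fin m → ZMod 2, define the vector ψ_{i,z} ∈ EuclideanSpace ℂ ((Fin m → ZMod 2) × ZMod 2 × ZMod 2) as ψ_{i,z} = (−1)^(z·w[i]) · e_(z, z·w[0], z·w[1]), where w[i] denotes w[0] if i = 0 and w[1] if i = 1. Then Σ_{z : Fin m → ZMod 2} (outer product of ψ_{0,z} with itself) = Σ_{z : Fin m → ZMod 2} (outer product of ψ_{1,z} with itself), where the outer product of a vector ψ with itself is the matrix with entry ψ(p)·conj(ψ(p'))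 at (p,p'). In other words, the mixed state held by the server just after receiving the user's message in the entanglement-assisted quantum PIR protocol is independent of the user's index bit i, so the protocol is perfectly private for the user. -/
/-!
The index `i` enters `ψ i z` only through the scalar `(-1) ^ (z · w[i])`, a phase in front of the
basis vector `e (z, z · w[0], z · w[1])`, which does not involve `i`. The outer product of a vector
with itself does not see a phase (`outer_neg_one_pow_smul`), so the two sums agree term by term.
-/

open scoped BigOperators

/-- The outer product of a vector with itself is invariant under multiplication by a sign. -/
theorem outer_neg_one_pow_smul {ι : Type*} (k : ℕ) (v : EuclideanSpace ℂ ι) (p p' : ι) :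
    (((-1 : ℂ) ^ k) • v) p * starRingEnd ℂ ((((-1 : ℂ) ^ k) • v) p') =
      v p * starRingEnd ℂ (v p') := by
  rcases neg_one_pow_eq_or ℂ k with h | h <;> simp [h]

/-- The mixed state held by the server just after receiving the user's message in the
entanglement-assisted quantum PIR protocol is independent of the user's index bit `i`. -/
theorem stmt11 (m : ℕ) (hm : 0 < m) (w : Fin (2 * m) → ZMod 2)
    (w0 w1 : Fin m → ZMod 2)
    (hw0 : ∀ t : Fin m, w0 t = w ⟨t.val, by have := t.isLt; omega⟩)
    (hw1 : ∀ t : Fin m, w1 t = w ⟨m + t.val, by have := t.isLt; omega⟩)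
    (ψ : ZMod 2 → (Fin m → ZMod 2) →
      EuclideanSpace ℂ ((Fin m → ZMod 2) × ZMod 2 × ZMod 2))
    (hψ : ∀ (i : ZMod 2) (z : Fin m → ZMod 2),
      ψ i z = ((-1 : ℂ) ^ ((ip z (if i = 0 then w0 else w1)).val)) •
        e (z, ip z w0, ip z w1)) :
    (∑ z : Fin m → ZMod 2,
        (Matrix.of fun p p' => ψ 0 z p * starRingEnd ℂ (ψ 0 z p') :
          Matrix ((Fin m → ZMod 2) × ZMod 2 × ZMod 2)
            ((Fin m → ZMod 2) × ZMod 2 × ZMod 2) ℂ)) =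
      (∑ z : Fin m → ZMod 2,
        (Matrix.of fun p p' => ψ 1 z p * starRingEnd ℂ (ψ 1 z p') :
          Matrix ((Fin m → ZMod 2) × ZMod 2 × ZMod 2)
            ((Fin m → ZMod 2) × ZMod 2 × ZMod 2) ℂ)) := by
  refine Finset.sum_congr rfl fun z _ => ?_
  ext p p'
  simp only [Matrix.of_apply, hψ, outer_neg_one_pow_smul]
end
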